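/- Let χ(ν) denote the square root of a chi-square random variable with ν degrees of freedom. Then for all u > 0: (i) P( χ(ν) ≥ √ν + √(2u) ) ≤ exp(−u), and (ii) P( χ(ν) ≤ √(uν) ) ≤ (2/√(πν)) (u e / 2)^{ν/4}. -/

import Mathlib

open MeasureTheory ProbabilityTheory Real

/-!
The sum of squares of `ν` independent standard Gaussians has the Gamma law of shape `ν / 2` and
rate `1 / 2`, since both have moment generating function `(1 - 2t) ^ (-ν / 2)` near `0`. So both
tails are instances of bounds for a Gamma law of shape `a` and rate `r`.

* Upper tail: with `ρ = 1 + √(u / a)`, so that `a (ρ - 1)² = u`, the Chernoff bound at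
  `t = r (1 - 1 / ρ)` is `ρ ^ a exp (-a ρ (ρ - 1))`, and `ρ ≤ exp (ρ - 1)`.
* Lower tail: in the density, `x ^ (a - 1) exp (-r x)` splits as `x ^ (a / 2 - 1)` times
  `x ^ (a / 2) exp (-r x)`, and the second factor is at most `(a / (2 e r)) ^ (a / 2)`, its maximum.
  What is left is the integral of a power, and Stirling's lower bound for `Γ (a + 1)` at real
  arguments turns the result into the stated form.
-/

open Set Filter
open scoped Topology NNReal

section Stirling

/-- The logarithm of `Γ (a + 1) / (√a (a / e) ^ a)`, the quantity that Stirling's formula compares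
with `log √(2π)`. -/
noncomputable def logStirlingRatio (a : ℝ) : ℝ :=
  log (Gamma (a + 1)) - (a + 1 / 2) * log a + a

lemma logStirlingRatio_add_one_le {a : ℝ} (ha : 0 < a) :
    logStirlingRatio (a + 1) ≤ logStirlingRatio a := by
  have hlog : 1 / (a + 1 / 2) ≤ log (a + 1) - log a := by
    have h := le_log_one_add_of_nonneg (x := 1 / a) (by positivity)
    rwa [show 2 * (1 / a) / (1 / a + 2) = 1 / (a + 1 / 2) by field_simp; ring,
      show 1 + 1 / a = (a + 1) / a by field_simp, log_div (by positivity) ha.ne'] at h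
  rw [div_le_iff₀ (by positivity)] at hlog
  rw [logStirlingRatio, logStirlingRatio, Gamma_add_one (s := a + 1) (by positivity),
    log_mul (by positivity) (Gamma_pos_of_pos (by positivity)).ne']
  linarith

lemma logStirlingRatio_add_natCast_le {a : ℝ} (ha : 0 < a) (n : ℕ) :
    logStirlingRatio (a + n) ≤ logStirlingRatio a := by
  induction n with
  | zero => simp
  | succ n ih =>
    rw [Nat.cast_succ, ← add_assoc]
    exact (logStirlingRatio_add_one_le (by positivity)).trans ih

lemma log_factorial_add_mul_log_le_log_Gamma {n : ℕ} (hn : n ≠ 0) {a : ℝ} (ha : 0 < a) :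
    log n.factorial + a * log n ≤ log (Gamma (a + n + 1)) := by
  have h := BohrMollerup.f_add_nat_ge (n := n + 1) convexOn_log_Gamma
    (fun {y} hy => by
      simp only [Function.comp_apply]
      rw [Gamma_add_one hy.ne', log_mul hy.ne' (Gamma_pos_of_pos hy).ne', add_comm])
    (by lia) ha
  simp only [Function.comp_apply, Nat.cast_add, Nat.cast_one, Gamma_nat_eq_factorial,
    add_sub_cancel_right] at h
  rwa [show a + n + 1 = n + 1 + a by ring]

lemma log_two_pi_div_two_sub_le_logStirlingRatio {n : ℕ} (hn : n ≠ 0) {a : ℝ} (ha : 0 < a) :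
    log (2 * π) / 2 - a * (a + 1 / 2) / n ≤ logStirlingRatio (a + n) := by
  have hn₀ : (0 : ℝ) < n := by positivity
  have hlog : log (a + n) ≤ log n + a / n := by
    have h := log_le_sub_one_of_pos (x := (a + n) / n) (by positivity)
    rw [log_div (by positivity) hn₀.ne', add_div, div_self hn₀.ne'] at h
    linarith
  have hmul : (a + n + 1 / 2) * log (a + n) ≤
      (a + n + 1 / 2) * log n + a + a * (a + 1 / 2) / n := calc
    _ ≤ (a + n + 1 / 2) * (log n + a / n) := by gcongr
    _ = _ := by field_simp; ring
  have hfact := Stirling.le_log_factorial_stirling hn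
  have hGamma := log_factorial_add_mul_log_le_log_Gamma hn ha
  rw [logStirlingRatio]
  linarith

lemma log_two_pi_div_two_le_logStirlingRatio {a : ℝ} (ha : 0 < a) :
    log (2 * π) / 2 ≤ logStirlingRatio a := by
  have hlim : Tendsto (fun n : ℕ => log (2 * π) / 2 - a * (a + 1 / 2) / n) atTop
      (𝓝 (log (2 * π) / 2)) := by
    simpa using tendsto_const_nhds.sub (tendsto_const_div_atTop_nhds_zero_nat (a * (a + 1 / 2)))
  refine le_of_tendsto hlim ?_
  filter_upwards [eventually_ne_atTop 0] with n hn
  exact (log_two_pi_div_two_sub_le_logStirlingRatio hn ha).trans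
    (logStirlingRatio_add_natCast_le ha n)

theorem sqrt_two_pi_mul_rpow_le_Gamma_add_one {a : ℝ} (ha : 0 < a) :
    √(2 * π * a) * (a / exp 1) ^ a ≤ Gamma (a + 1) := by
  have h := log_two_pi_div_two_le_logStirlingRatio ha
  rw [logStirlingRatio] at h
  rw [← log_le_log_iff (by positivity) (Gamma_pos_of_pos (by positivity)),
    log_mul (by positivity) (by positivity), log_sqrt (by positivity),
    log_mul (by positivity) ha.ne', log_rpow (by positivity), log_div ha.ne' (exp_ne_zero 1),
    log_exp]
  linarith

end Stirling

section MomentGeneratingFunction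

variable {Ω : Type*} {mΩ : MeasurableSpace Ω} {P : Measure Ω} {X : Ω → ℝ} {μ : Measure ℝ}

lemma mgf_eq_of_hasLaw (hX : HasLaw X μ P) : mgf X P = mgf id μ := by
  rw [← mgf_id_map hX.aemeasurable, hX.map_eq]

lemma complexMGF_eqOn_of_mgf_eventuallyEq
    (hX : 0 ∈ interior (integrableExpSet X P)) (hμ : 0 ∈ interior (integrableExpSet id μ))
    (h : mgf X P =ᶠ[𝓝 0] mgf id μ) :
    EqOn (complexMGF X P) (complexMGF id μ)
      {z | z.re ∈ interior (integrableExpSet X P) ∩ interior (integrableExpSet id μ)} := by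
  have hfreq : ∃ᶠ z in 𝓝[≠] (0 : ℂ), complexMGF X P z = complexMGF id μ z := by
    have hofReal : Tendsto Complex.ofReal (𝓝[≠] 0) (𝓝[≠] 0) :=
      Complex.continuous_ofReal.continuousAt.continuousWithinAt.tendsto_nhdsWithin
        fun x hx => by simpa using hx
    refine hofReal.frequently (Eventually.frequently ?_)
    filter_upwards [h.filter_mono nhdsWithin_le_nhds] with t ht
    rw [complexMGF_ofReal, complexMGF_ofReal, ht]
  have hconvex : Convex ℝ (interior (integrableExpSet X P) ∩ interior (integrableExpSet id μ)) :=
    convex_integrableExpSet.interior.inter convex_integrableExpSet.interior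
  exact AnalyticOnNhd.eqOn_of_preconnected_of_frequently_eq
    (analyticOnNhd_complexMGF.mono fun z hz => hz.1)
    (analyticOnNhd_complexMGF.mono fun z hz => hz.2)
    (hconvex.linear_preimage Complex.reLm).isPreconnected ⟨hX, hμ⟩ hfreq

theorem hasLaw_of_mgf_eventuallyEq [IsProbabilityMeasure P] [IsProbabilityMeasure μ]
    (hXm : AEMeasurable X P) (hμ : 0 ∈ interior (integrableExpSet id μ))
    (h : mgf X P =ᶠ[𝓝 0] mgf id μ) : HasLaw X μ P where
  aemeasurable := hXm
  map_eq := by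
    have hX : 0 ∈ interior (integrableExpSet X P) := by
      rw [mem_interior_iff_mem_nhds] at hμ ⊢
      filter_upwards [h, hμ] with t ht hint
      exact mgf_pos_iff.1 (ht ▸ mgf_pos hint)
    have : IsProbabilityMeasure (P.map X) := Measure.isProbabilityMeasure_map hXm
    refine Measure.ext_of_charFun (funext fun t => ?_)
    rw [← complexMGF_mul_I hXm, ← complexMGF_id_mul_I]
    exact complexMGF_eqOn_of_mgf_eventuallyEq hX hμ h (by simpa using ⟨hX, hμ⟩)

end MomentGeneratingFunction

section GammaLaw

variable {a r : ℝ}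

lemma mgf_id_gammaMeasure (ha : 0 < a) (hr : 0 < r) {t : ℝ} (ht : t < r) :
    mgf id (gammaMeasure a r) t = (r / (r - t)) ^ a := by
  have hrt : 0 < r - t := sub_pos.2 ht
  calc mgf id (gammaMeasure a r) t
      = ∫ x, gammaPDFReal a r x * exp (t * x) := by
        rw [mgf, gammaMeasure, integral_withDensity_eq_integral_toReal_smul
          (f := gammaPDF a r) (measurable_gammaPDFReal a r).ennreal_ofReal (by simp [gammaPDF])]
        simp [gammaPDF, gammaPDFReal_nonneg ha hr]
    _ = ∫ x in Ici 0, r ^ a / Gamma a * (x ^ (a - 1) * exp (-((r - t) * x))) := by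
        rw [← integral_indicator measurableSet_Ici]
        congr with x
        by_cases hx : 0 ≤ x
        · simp only [gammaPDFReal, hx, if_true, mem_Ici, indicator_of_mem]
          rw [mul_assoc, mul_assoc, ← exp_add]
          ring_nf
        · simp [gammaPDFReal, hx]
    _ = (r / (r - t)) ^ a := by
        rw [integral_Ici_eq_integral_Ioi, integral_const_mul,
          integral_rpow_mul_exp_neg_mul_Ioi ha hrt, div_rpow hr.le hrt.le,
          div_rpow zero_le_one hrt.le, one_rpow]
        field_simp [(Gamma_pos_of_pos ha).ne']

lemma Iio_subset_integrableExpSet_gammaMeasure (ha : 0 < a) (hr : 0 < r) :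
    Iio r ⊆ integrableExpSet id (gammaMeasure a r) := by
  intro t ht
  have := isProbabilityMeasure_gammaMeasure ha hr
  have hrt : 0 < r - t := sub_pos.2 ht
  refine mgf_pos_iff.1 ?_
  rw [mgf_id_gammaMeasure ha hr ht]
  positivity

variable {Ω : Type*} {mΩ : MeasurableSpace Ω} {P : Measure Ω}

theorem hasLaw_gammaMeasure_of_mgf [IsProbabilityMeasure P] {X : Ω → ℝ} (hX : AEMeasurable X P)
    (ha : 0 < a) (hr : 0 < r) (h : ∀ t < r, mgf X P t = (r / (r - t)) ^ a) :
    HasLaw X (gammaMeasure a r) P := by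
  have := isProbabilityMeasure_gammaMeasure ha hr
  refine hasLaw_of_mgf_eventuallyEq hX
    (interior_maximal (Iio_subset_integrableExpSet_gammaMeasure ha hr) isOpen_Iio hr) ?_
  filter_upwards [Iio_mem_nhds hr] with t ht
  rw [h t ht, mgf_id_gammaMeasure ha hr ht]

theorem hasLaw_sum_gammaMeasure {ι : Type*} [Fintype ι] [Nonempty ι] {X : ι → Ω → ℝ}
    {a : ι → ℝ} (ha : ∀ i, 0 < a i) (hr : 0 < r) (hindep : iIndepFun X P)
    (hX : ∀ i, HasLaw (X i) (gammaMeasure (a i) r) P) :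
    HasLaw (∑ i, X i) (gammaMeasure (∑ i, a i) r) P := by
  have := hindep.isProbabilityMeasure
  have hXm i : AEMeasurable (X i) P := (hX i).aemeasurable
  refine hasLaw_gammaMeasure_of_mgf (Finset.univ.aemeasurable_sum fun i _ => hXm i)
    (Finset.sum_pos (fun i _ => ha i) Finset.univ_nonempty) hr fun t ht => ?_
  have : 0 < r - t := sub_pos.2 ht
  rw [hindep.mgf_sum₀ hXm, rpow_sum_of_pos (by positivity)]
  exact Finset.prod_congr rfl fun i _ => by
    rw [mgf_eq_of_hasLaw (hX i), mgf_id_gammaMeasure (ha i) hr ht]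

end GammaLaw

section ChiSquare

lemma mgf_sq_gaussianReal {v : ℝ≥0} (hv : v ≠ 0) (t : ℝ) :
    mgf (· ^ 2) (gaussianReal 0 v) t = (1 / (2 * v) / (1 / (2 * v) - t)) ^ (1 / 2 : ℝ) := by
  have : (0 : ℝ) < v := by positivity
  calc mgf (· ^ 2) (gaussianReal 0 v) t
      = ∫ x : ℝ, (√(2 * π * v))⁻¹ * exp (-(1 / (2 * v) - t) * x ^ 2) := by
        simp only [mgf, integral_gaussianReal_eq_integral_smul hv, gaussianPDFReal, sub_zero,
          smul_eq_mul, mul_assoc, ← exp_add]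
        congr with x
        ring_nf
    _ = √(1 / (2 * v) / (1 / (2 * v) - t)) := by
        rw [integral_const_mul, integral_gaussian, ← sqrt_inv, ← sqrt_mul (by positivity)]
        congr 1
        field_simp
    _ = _ := sqrt_eq_rpow _

theorem hasLaw_sq_gaussianReal {v : ℝ≥0} (hv : v ≠ 0) :
    HasLaw (· ^ 2) (gammaMeasure (1 / 2) (1 / (2 * v))) (gaussianReal 0 v) :=
  hasLaw_gammaMeasure_of_mgf (by fun_prop) (by norm_num) (by positivity)
    fun t _ => mgf_sq_gaussianReal hv t

theorem hasLaw_sum_sq_pi_gaussianReal {ι : Type*} [Fintype ι] [Nonempty ι] {v : ℝ≥0}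
    (hv : v ≠ 0) :
    HasLaw (fun g : ι → ℝ => ∑ i, g i ^ 2) (gammaMeasure (Fintype.card ι / 2) (1 / (2 * v)))
      (Measure.pi fun _ : ι => gaussianReal 0 v) := by
  have hlaw (i : ι) : HasLaw (fun g : ι → ℝ => g i ^ 2) (gammaMeasure (1 / 2) (1 / (2 * v)))
      (Measure.pi fun _ : ι => gaussianReal 0 v) :=
    (hasLaw_sq_gaussianReal hv).fun_comp
      (measurePreserving_eval (fun _ => gaussianReal 0 v) i).hasLaw
  have hindep : iIndepFun (fun i (g : ι → ℝ) => g i ^ 2)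
      (Measure.pi fun _ : ι => gaussianReal 0 v) :=
    iIndepFun_pi (X := fun _ x => x ^ 2) fun _ => by fun_prop
  have hsum := hasLaw_sum_gammaMeasure (fun _ => by norm_num) (by positivity) hindep hlaw
  convert hsum using 1
  · ext g
    simp
  · simp [div_eq_mul_inv]

end ChiSquare

section GammaTails

variable {a r : ℝ}

lemma rpow_mul_exp_neg_mul_sub_one_le {ρ : ℝ} (ha : 0 ≤ a) (hρ : 0 ≤ ρ) :
    ρ ^ a * exp (-(a * ρ * (ρ - 1))) ≤ exp (-(a * (ρ - 1) ^ 2)) := by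
  have hpow : ρ ^ a ≤ exp (a * (ρ - 1)) := calc
    ρ ^ a ≤ exp (ρ - 1) ^ a := by
      gcongr
      simpa using add_one_le_exp (ρ - 1)
    _ = exp (a * (ρ - 1)) := by rw [← exp_mul, mul_comm]
  calc ρ ^ a * exp (-(a * ρ * (ρ - 1)))
      ≤ exp (a * (ρ - 1)) * exp (-(a * ρ * (ρ - 1))) := by gcongr
    _ = exp (-(a * (ρ - 1) ^ 2)) := by
        rw [← exp_add]
        ring_nf

theorem gammaMeasure_real_Ici_le (ha : 0 < a) (hr : 0 < r) {u : ℝ} (hu : 0 ≤ u) :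
    (gammaMeasure a r).real (Ici ((√a + √u) ^ 2 / r)) ≤ exp (-u) := by
  have := isProbabilityMeasure_gammaMeasure ha hr
  set ρ : ℝ := 1 + √(u / a) with hρ
  have hρ₁ : 1 ≤ ρ := by simp [hρ]
  have hρ₀ : 0 < ρ := by positivity
  have hthreshold : √a + √u = √a * ρ := by
    rw [hρ, sqrt_div hu]
    field_simp
  have hu_eq : a * (ρ - 1) ^ 2 = u := by
    rw [hρ, add_sub_cancel_left, sq_sqrt (by positivity)]
    field_simp
  set t : ℝ := r * (1 - 1 / ρ) with ht
  have ht₀ : 0 ≤ t := mul_nonneg hr.le (sub_nonneg.2 ((div_le_one hρ₀).2 hρ₁))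
  have hrt : r - t = r / ρ := by
    rw [ht]
    ring
  have htr : t < r := sub_pos.1 (hrt ▸ by positivity)
  calc (gammaMeasure a r).real (Ici ((√a + √u) ^ 2 / r))
      ≤ exp (-t * ((√a + √u) ^ 2 / r)) * mgf id (gammaMeasure a r) t :=
        measure_ge_le_exp_mul_mgf _ ht₀ (Iio_subset_integrableExpSet_gammaMeasure ha hr htr)
    _ = ρ ^ a * exp (-(a * ρ * (ρ - 1))) := by
        rw [mgf_id_gammaMeasure ha hr htr, hrt, div_div_cancel₀ hr.ne', hthreshold, mul_pow,
          sq_sqrt ha.le, mul_comm, ht]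
        congr 2
        field_simp
    _ ≤ exp (-(a * (ρ - 1) ^ 2)) := rpow_mul_exp_neg_mul_sub_one_le ha.le hρ₀.le
    _ = exp (-u) := by rw [hu_eq]

lemma rpow_mul_exp_neg_mul_le {s x : ℝ} (hs : 0 < s) (hr : 0 < r) (hx : 0 ≤ x) :
    x ^ s * exp (-(r * x)) ≤ (s / (exp 1 * r)) ^ s := calc
  x ^ s * exp (-(r * x)) = (s / r * (r * x / s * exp (-(r * x / s)))) ^ s := by
    rw [← mul_assoc, mul_rpow (by positivity) (exp_pos _).le, ← exp_mul]
    congr 2 <;> field_simp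
  _ ≤ (s / r * exp (-1)) ^ s := by
    gcongr
    exact mul_exp_neg_le_exp_neg_one _
  _ = (s / (exp 1 * r)) ^ s := by
    rw [exp_neg]
    congr 1
    field_simp

lemma gammaPDFReal_le (ha : 0 < a) (hr : 0 < r) {x : ℝ} (hx : 0 < x) :
    gammaPDFReal a r x ≤
      r ^ a / Gamma a * (a / 2 / (exp 1 * r)) ^ (a / 2) * x ^ (a / 2 - 1) := by
  have hsplit : x ^ (a - 1) = x ^ (a / 2) * x ^ (a / 2 - 1) := by
    rw [← rpow_add hx]
    ring_nf
  calc gammaPDFReal a r x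
      = r ^ a / Gamma a * (x ^ (a / 2) * exp (-(r * x))) * x ^ (a / 2 - 1) := by
        rw [gammaPDFReal, if_pos hx.le, hsplit]
        ring
    _ ≤ _ := by
        gcongr
        exact rpow_mul_exp_neg_mul_le (by positivity) hr hx.le

lemma gammaMeasure_real_Iic_eq_integral (ha : 0 < a) (hr : 0 < r) {x : ℝ} (hx : 0 ≤ x) :
    (gammaMeasure a r).real (Iic x) = ∫ y in (0)..x, gammaPDFReal a r y := by
  have := isProbabilityMeasure_gammaMeasure ha hr
  rw [← cdf_eq_real, cdf_gammaMeasure_eq_integral ha hr, intervalIntegral.integral_of_le hx,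
    ← integral_Icc_eq_integral_Ioc]
  exact setIntegral_eq_of_subset_of_forall_sdiff_eq_zero measurableSet_Iic Icc_subset_Iic_self
    fun y hy => if_neg fun hy₀ : 0 ≤ y => hy.2 ⟨hy₀, hy.1⟩

lemma gammaMeasure_real_Iic_le_div_Gamma (ha : 0 < a) (hr : 0 < r) {x : ℝ} (hx : 0 ≤ x) :
    (gammaMeasure a r).real (Iic x) ≤
      2 / Gamma (a + 1) * (a * r * x / (2 * exp 1)) ^ (a / 2) := by
  set C : ℝ := r ^ a / Gamma a * (a / 2 / (exp 1 * r)) ^ (a / 2) with hC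
  have hint : IntervalIntegrable (fun y : ℝ => C * y ^ (a / 2 - 1)) volume 0 x :=
    (intervalIntegral.intervalIntegrable_rpow' (by linarith)).const_mul C
  calc (gammaMeasure a r).real (Iic x)
      = ∫ y in (0)..x, gammaPDFReal a r y := gammaMeasure_real_Iic_eq_integral ha hr hx
    _ ≤ ∫ y in (0)..x, C * y ^ (a / 2 - 1) := by
        rw [intervalIntegral.integral_of_le hx, intervalIntegral.integral_of_le hx]
        refine integral_mono_of_nonneg (ae_of_all _ (gammaPDFReal_nonneg ha hr)) hint.1 ?_
        filter_upwards [ae_restrict_mem measurableSet_Ioc] with y hy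
        exact gammaPDFReal_le ha hr hy.1
    _ = C * (x ^ (a / 2) / (a / 2)) := by
        rw [intervalIntegral.integral_const_mul, integral_rpow (Or.inl (by linarith)),
          sub_add_cancel, zero_rpow (by positivity), sub_zero]
    _ = 2 / (a * Gamma a) * (r * r * (a / 2 / (exp 1 * r)) * x) ^ (a / 2) := by
        rw [mul_rpow (by positivity) hx, mul_rpow (by positivity) (by positivity),
          mul_rpow hr.le hr.le, ← rpow_add hr, add_halves, hC]
        field_simp
    _ = _ := by
        rw [Gamma_add_one ha.ne']
        congr 2
        field_simp

theorem gammaMeasure_real_Iic_le (ha : 0 < a) (hr : 0 < r) {u : ℝ} (hu : 0 ≤ u) :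
    (gammaMeasure a r).real (Iic (u * a / r)) ≤
      2 / √(2 * π * a) * (u * exp 1 / 2) ^ (a / 2) := calc
  _ ≤ 2 / Gamma (a + 1) * (a * r * (u * a / r) / (2 * exp 1)) ^ (a / 2) :=
    gammaMeasure_real_Iic_le_div_Gamma ha hr (by positivity)
  _ ≤ 2 / (√(2 * π * a) * (a / exp 1) ^ a) *
      (a * r * (u * a / r) / (2 * exp 1)) ^ (a / 2) := by
    gcongr
    exact sqrt_two_pi_mul_rpow_le_Gamma_add_one ha
  _ = 2 / (√(2 * π * a) * (a / exp 1) ^ a) *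
      ((a / exp 1) ^ a * (u * exp 1 / 2) ^ (a / 2)) := by
    have hsq : (a / exp 1) ^ a = (a / exp 1 * (a / exp 1)) ^ (a / 2) := by
      rw [mul_rpow (by positivity) (by positivity), ← rpow_add (by positivity), add_halves]
    rw [hsq, ← mul_rpow (by positivity) (by positivity)]
    congr 2
    field_simp
  _ = _ := by field_simp

end GammaTails

/-- Chi-square tail bounds.  Let `χ(ν)` be the square root of a chi-square
random variable with `ν ≥ 1` degrees of freedom, realized as `√(∑ i, g i ^ 2)` for `g` drawn
from the product of `ν` standard Gaussians. Then for `u > 0`: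
(i) `P(χ(ν) ≥ √ν + √(2u)) ≤ exp(-u)`, and
(ii) `P(χ(ν) ≤ √(u ν)) ≤ (2/√(π ν)) (u e/2)^(ν/4)`. -/
theorem chi_square_tail_bounds
    (ν : ℕ) (hν : 1 ≤ ν) (u : ℝ) (hu : 0 < u)
    (μ : Measure (Fin ν → ℝ))
    (hμ : μ = Measure.pi fun _ : Fin ν => gaussianReal 0 1) :
    (μ {g | Real.sqrt ν + Real.sqrt (2 * u) ≤ Real.sqrt (∑ i, (g i) ^ 2)}).toReal
        ≤ Real.exp (-u) ∧
      (μ {g | Real.sqrt (∑ i, (g i) ^ 2) ≤ Real.sqrt (u * ν)}).toReal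
        ≤ 2 / Real.sqrt (π * ν) * (u * Real.exp 1 / 2) ^ ((ν : ℝ) / 4) := by
  have : Nonempty (Fin ν) := ⟨⟨0, hν⟩⟩
  have hshape : (0 : ℝ) < ν / 2 := by positivity
  have hlaw : HasLaw (fun g : Fin ν → ℝ => ∑ i, g i ^ 2) (gammaMeasure (ν / 2) (1 / 2)) μ := by
    simpa [hμ] using hasLaw_sum_sq_pi_gaussianReal (ι := Fin ν) one_ne_zero
  constructor
  · have hthreshold : (√ν + √(2 * u)) ^ 2 = (√(ν / 2) + √u) ^ 2 / (1 / 2) := by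
      rw [sqrt_mul zero_le_two, sqrt_div' _ zero_le_two]
      field_simp
      exact sq_sqrt zero_le_two
    simp only [le_sqrt' (show 0 < √(ν : ℝ) + √(2 * u) by positivity), hthreshold]
    exact (hlaw.measureReal_eq measurableSet_Ici).trans_le
      (gammaMeasure_real_Ici_le hshape one_half_pos hu.le)
  · have htail := gammaMeasure_real_Iic_le hshape (one_half_pos (α := ℝ)) hu.le
    rw [show u * (ν / 2) / (1 / 2) = u * ν by ring, show 2 * π * (ν / 2) = π * ν by ring,
      show (ν : ℝ) / 2 / 2 = ν / 4 by ring] at htail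
    simp only [sqrt_le_sqrt_iff (show 0 ≤ u * (ν : ℝ) by positivity)]
    exact (hlaw.measureReal_eq measurableSet_Iic).trans_le htail
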